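/- arXiv:2112.04730 — 5 statements merged into one kernel-verified Lean document; each statement's English description precedes it below -/
import Mathlib

section
/- Let −∞ < t₁ < t₂ ≤ τ₀ and let χ = (χ_1,…,χ_n) be continuous on [t₂,∞). Under conditions (L*), (LI*) and (Adv), for all x, y ∈ AC^{n*}_χ[t₁,t₂] one has ρ(J x, J y) ≤ N·(∑_{k=1}^n ∫_{t₁}^{t₂} h_k(τ) dτ)·ρ(x,y); consequently, if N·∑_{k=1}^n ∫_{t₁}^{t₂} h_k(τ) dτ < 1, then the operator J = J_{χ,t₁,t₂} is a contracting mapping of the complete metric space AC^{n*}_χ[t₁,t₂] into itself. -/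
/-! The advance condition `t ≤ β m j t` means that for `τ ∈ [t₁, t₂]` the integrand of `J` only
evaluates `x m` at points `≥ t₁`, where `x m` is continuous. Replacing `x m` by its continuous
extension `s ↦ x m (max t₁ s)` therefore does not change the integrand on `[t₁, t₂]` and makes it a
superposition of measurable functions, hence integrable (`integrableOn_superposition`). So `J x` is
an indefinite integral on `[t₁, t₂]`, glued continuously to `χ` at `t₂`.

For the estimate, `x m` and `y m` agree on `[t₂, ∞)`, so at every point `≥ t₁` their difference is
bounded by its maximum over `[t₁, t₂]` (`abs_sub_le_sSup`). The Lipschitz condition then bounds the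
difference of the integrands by `h k τ * (N * ρ(x, y))`; integrate and sum over `k`. -/

open MeasureTheory Set intervalIntegral

/-- Membership in the complete metric space `AC^{n*}_χ[t₁,t₂]`: continuous on `[t₁,∞)`,
equal to `χ` on `[t₂,∞)`, and absolutely continuous on `[t₁,t₂]` (expressed as being an
indefinite integral of an integrable function there). -/
def MemACstar (n : ℕ) (t₁ t₂ : ℝ) (χ : Fin n → ℝ → ℝ) (x : Fin n → ℝ → ℝ) : Prop :=
  (∀ k, ContinuousOn (x k) (Set.Ici t₁)) ∧
  (∀ k, ∀ t, t₂ ≤ t → x k t = χ k t) ∧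
  (∀ k, ∃ g : ℝ → ℝ, MeasureTheory.IntegrableOn g (Set.Icc t₁ t₂) ∧
      ∀ t ∈ Set.Icc t₁ t₂, x k t = x k t₂ + ∫ τ in t..t₂, g τ)

/-- The distance `ρ(x,y) = ∑_k max_{t ∈ [t₁,t₂]} |x_k(t) - y_k(t)|`. -/
noncomputable def rho (n : ℕ) (t₁ t₂ : ℝ) (x y : Fin n → ℝ → ℝ) : ℝ :=
  ∑ k : Fin n, sSup ((fun t => |x k t - y k t|) '' Set.Icc t₁ t₂)

/-- The operator `J = J_{χ,t₁,t₂}`. -/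
noncomputable def Jop (n N : ℕ) (t₂ : ℝ)
    (G : Fin n → ℝ → (Fin n → Fin N → ℝ) → ℝ)
    (β : Fin n → Fin N → ℝ → ℝ)
    (χ x : Fin n → ℝ → ℝ) : Fin n → ℝ → ℝ :=
  fun k t =>
    if t₂ ≤ t then x k t
    else χ k t₂ + ∫ τ in t..t₂, G k τ fun m j => x m (β m j τ)

/-- Outside `[t₁, t₂]` the difference `x k - y k` vanishes, so the maximum in `rho` controls it on
all of `[t₁, ∞)`. -/
theorem abs_sub_le_sSup {n : ℕ} {t₁ t₂ : ℝ} {χ x y : Fin n → ℝ → ℝ}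
    (hx : MemACstar n t₁ t₂ χ x) (hy : MemACstar n t₁ t₂ χ y) (k : Fin n) {s : ℝ} (hs : t₁ ≤ s) :
    |x k s - y k s| ≤ sSup ((fun t => |x k t - y k t|) '' Set.Icc t₁ t₂) := by
  rcases le_total s t₂ with h | h
  · have hc : ContinuousOn (fun t => |x k t - y k t|) (Set.Icc t₁ t₂) :=
      (((hx.1 k).sub (hy.1 k)).abs).mono Set.Icc_subset_Ici_self
    exact le_csSup (isCompact_Icc.image_of_continuousOn hc).bddAbove ⟨s, ⟨hs, h⟩, rfl⟩
  · rw [hx.2.1 k s h, hy.2.1 k s h, sub_self, abs_zero]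
    apply Real.sSup_nonneg
    rintro _ ⟨t, -, rfl⟩
    exact abs_nonneg _

/-- The integrand of `J x` is integrable on `[t₁, t₂]`: by the advance condition it agrees there
with the superposition built from the continuous functions `s ↦ x m (max t₁ s)`. -/
theorem integrableOn_superposition {τ₀ : ℝ} {n N : ℕ} {g : ℝ → (Fin n → Fin N → ℝ) → ℝ}
    {β : Fin n → Fin N → ℝ → ℝ}
    (hLI : ∀ ψ : Fin n → Fin N → ℝ → ℝ, (∀ m j, Measurable (ψ m j)) →
        LocallyIntegrableOn (fun t => g t fun m j => ψ m j t) (Set.Iic τ₀))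
    (hβ : ∀ m j, Measurable (β m j)) (hAdv : ∀ m j, ∀ t, t ≤ τ₀ → t ≤ β m j t)
    {t₁ t₂ : ℝ} (h20 : t₂ ≤ τ₀) {x : Fin n → ℝ → ℝ}
    (hx : ∀ k, ContinuousOn (x k) (Set.Ici t₁)) :
    IntegrableOn (fun τ => g τ fun m j => x m (β m j τ)) (Set.Icc t₁ t₂) := by
  have hmeas : ∀ m j, Measurable (fun τ => x m (max t₁ (β m j τ))) := fun m j => by
    have hc : Continuous (fun s => x m (max t₁ s)) :=
      (hx m).comp_continuous (by fun_prop) fun s => le_max_left t₁ s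
    exact hc.measurable.comp (hβ m j)
  have hint := (hLI (fun m j τ => x m (max t₁ (β m j τ))) hmeas).integrableOn_compact_subset
    (fun t ht => ht.2.trans h20 : Set.Icc t₁ t₂ ⊆ Set.Iic τ₀) isCompact_Icc
  refine hint.congr_fun (fun τ hτ => ?_) measurableSet_Icc
  have hmax : ∀ m j, max t₁ (β m j τ) = β m j τ := fun m j =>
    max_eq_right (hτ.1.trans (hAdv m j τ (hτ.2.trans h20)))
  simp only [hmax]

theorem contracting_advanced (τ₀ : ℝ) (n N : ℕ) (hn : 0 < n) (hN : 0 < N)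
    (G : Fin n → ℝ → (Fin n → Fin N → ℝ) → ℝ)
    (h : Fin n → ℝ → ℝ)
    (β : Fin n → Fin N → ℝ → ℝ)
    -- continuity of G k t in u
    (hGcont : ∀ k, ∀ t, t ≤ τ₀ → Continuous (G k t))
    -- (L*): the Lipschitz condition, with h k nonnegative and locally integrable
    (hh0 : ∀ k, ∀ t, t ≤ τ₀ → 0 ≤ h k t)
    (hhloc : ∀ k, LocallyIntegrableOn (h k) (Set.Iic τ₀))
    (hL : ∀ k, ∀ t, t ≤ τ₀ → ∀ u v : Fin n → Fin N → ℝ,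
        |G k t u - G k t v| ≤ h k t * ∑ m : Fin n, ∑ j : Fin N, |u m j - v m j|)
    -- (LI*): local integrability of superpositions
    (hLI : ∀ k, ∀ ψ : Fin n → Fin N → ℝ → ℝ, (∀ m j, Measurable (ψ m j)) →
        LocallyIntegrableOn (fun t => G k t fun m j => ψ m j t) (Set.Iic τ₀))
    -- β measurable and (Adv): the advance condition
    (hβ : ∀ m j, Measurable (β m j))
    (hAdv : ∀ m j, ∀ t, t ≤ τ₀ → t ≤ β m j t)
    (t₁ t₂ : ℝ) (h12 : t₁ < t₂) (h20 : t₂ ≤ τ₀)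
    (χ : Fin n → ℝ → ℝ) (hχ : ∀ k, ContinuousOn (χ k) (Set.Ici t₂)) :
    (∀ x y, MemACstar n t₁ t₂ χ x → MemACstar n t₁ t₂ χ y →
        rho n t₁ t₂ (Jop n N t₂ G β χ x) (Jop n N t₂ G β χ y) ≤
          (N : ℝ) * (∑ k : Fin n, ∫ τ in t₁..t₂, h k τ) * rho n t₁ t₂ x y) ∧
    ((N : ℝ) * (∑ k : Fin n, ∫ τ in t₁..t₂, h k τ) < 1 →
      ∀ x, MemACstar n t₁ t₂ χ x → MemACstar n t₁ t₂ χ (Jop n N t₂ G β χ x)) := by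
  have hI : ∀ x, MemACstar n t₁ t₂ χ x → ∀ k,
      IntegrableOn (fun τ => G k τ fun m j => x m (β m j τ)) (Set.Icc t₁ t₂) := fun x hx k =>
    integrableOn_superposition (hLI k) hβ hAdv h20 hx.1
  -- At `t = t₂` both branches of `Jop` give `χ k t₂`, so the integral formula holds up to `t₂`.
  have hJ : ∀ x, MemACstar n t₁ t₂ χ x → ∀ k, ∀ t ∈ Set.Icc t₁ t₂,
      Jop n N t₂ G β χ x k t = χ k t₂ + ∫ τ in t..t₂, G k τ fun m j => x m (β m j τ) := by
    intro x hx k t ht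
    unfold Jop
    split_ifs with h
    · obtain rfl : t = t₂ := le_antisymm ht.2 h
      simp [hx.2.1 k t le_rfl]
    · rfl
  have hJ2 : ∀ x k t, t₂ ≤ t → Jop n N t₂ G β χ x k t = x k t := fun x k t ht => by
    simp [Jop, ht]
  refine ⟨fun x y hx hy => ?_, fun _ x hx => ⟨fun k => ?_, fun k t ht => ?_, fun k => ?_⟩⟩
  · have hρ : 0 ≤ rho n t₁ t₂ x y := Finset.sum_nonneg fun k _ => by
      apply Real.sSup_nonneg
      rintro _ ⟨t, -, rfl⟩
      exact abs_nonneg _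
    have hhI : ∀ k, IntegrableOn (h k) (Set.Icc t₁ t₂) := fun k =>
      (hhloc k).integrableOn_compact_subset (fun t ht => ht.2.trans h20) isCompact_Icc
    have key : ∀ k, ∀ t ∈ Set.Icc t₁ t₂,
        |Jop n N t₂ G β χ x k t - Jop n N t₂ G β χ y k t| ≤
          (∫ τ in t₁..t₂, h k τ) * (N * rho n t₁ t₂ x y) := by
      intro k t ht
      have hsub : Set.uIcc t t₂ ⊆ Set.Icc t₁ t₂ := by
        rw [Set.uIcc_of_le ht.2]
        exact Set.Icc_subset_Icc_left ht.1
      have hii : ∀ f : ℝ → ℝ, IntegrableOn f (Set.Icc t₁ t₂) →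
          IntervalIntegrable f volume t t₂ := fun f hf => (hf.mono_set hsub).intervalIntegrable
      have hh' : IntervalIntegrable (h k) volume t₁ t₂ :=
        (intervalIntegrable_iff_integrableOn_Icc_of_le h12.le).2 (hhI k)
      have hbound : ∀ τ ∈ Set.Icc t₁ t₂,
          ‖(G k τ fun m j => x m (β m j τ)) - G k τ fun m j => y m (β m j τ)‖ ≤
            h k τ * (N * rho n t₁ t₂ x y) := by
        intro τ hτ
        have hτ0 := hτ.2.trans h20
        refine (hL k τ hτ0 _ _).trans (mul_le_mul_of_nonneg_left ?_ (hh0 k τ hτ0))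
        calc ∑ m : Fin n, ∑ j : Fin N, |x m (β m j τ) - y m (β m j τ)|
            ≤ ∑ m : Fin n, ∑ _j : Fin N,
                sSup ((fun t => |x m t - y m t|) '' Set.Icc t₁ t₂) :=
              Finset.sum_le_sum fun m _ => Finset.sum_le_sum fun j _ =>
                abs_sub_le_sSup hx hy m (hτ.1.trans (hAdv m j τ hτ0))
          _ = N * rho n t₁ t₂ x y := by
              simp [rho, Finset.mul_sum]
      rw [hJ x hx k t ht, hJ y hy k t ht, add_sub_add_left_eq_sub,
        ← intervalIntegral.integral_sub (hii _ (hI x hx k)) (hii _ (hI y hy k)), ← Real.norm_eq_abs]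
      calc ‖∫ τ in t..t₂, ((G k τ fun m j => x m (β m j τ)) - G k τ fun m j => y m (β m j τ))‖
          ≤ ∫ τ in t..t₂, h k τ * (N * rho n t₁ t₂ x y) :=
            intervalIntegral.norm_integral_le_of_norm_le ht.2
              (Filter.Eventually.of_forall fun τ hτ =>
                hbound τ ⟨ht.1.trans hτ.1.le, hτ.2⟩) ((hii _ (hhI k)).mul_const _)
        _ = (∫ τ in t..t₂, h k τ) * (N * rho n t₁ t₂ x y) :=
            intervalIntegral.integral_mul_const _ _
        _ ≤ (∫ τ in t₁..t₂, h k τ) * (N * rho n t₁ t₂ x y) := by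
            refine mul_le_mul_of_nonneg_right ?_ (by positivity)
            refine intervalIntegral.integral_mono_interval ht.1 ht.2 le_rfl ?_ hh'
            filter_upwards [ae_restrict_mem measurableSet_Ioc] with τ hτ
            exact hh0 k τ (hτ.2.trans h20)
    calc rho n t₁ t₂ (Jop n N t₂ G β χ x) (Jop n N t₂ G β χ y)
        ≤ ∑ k : Fin n, (∫ τ in t₁..t₂, h k τ) * (N * rho n t₁ t₂ x y) := by
          refine Finset.sum_le_sum fun k _ => csSup_le ((Set.nonempty_Icc.2 h12.le).image _) ?_
          rintro _ ⟨t, ht, rfl⟩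
          exact key k t ht
      _ = N * (∑ k : Fin n, ∫ τ in t₁..t₂, h k τ) * rho n t₁ t₂ x y := by
          rw [← Finset.sum_mul]
          ring
  · rw [← Set.Icc_union_Ici_eq_Ici h12.le]
    refine ContinuousOn.union_of_isClosed ?_ ?_ isClosed_Icc isClosed_Ici
    · have hc := intervalIntegral.continuousOn_primitive_interval_left
        (a := t₁) (b := t₂) (by rw [Set.uIcc_of_le h12.le]; exact hI x hx k)
      rw [Set.uIcc_of_le h12.le] at hc
      exact (continuousOn_const.add hc).congr (hJ x hx k)
    · exact ((hx.1 k).mono (Set.Ici_subset_Ici.2 h12.le)).congr (hJ2 x k)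
  · rw [hJ2 x k t ht, hx.2.1 k t ht]
  · refine ⟨_, hI x hx k, fun t ht => ?_⟩
    rw [hJ x hx k t ht, hJ2 x k t₂ le_rfl, hx.2.1 k t₂ le_rfl]
end

section
/- Assume conditions (L), (LI) and (Ret), and let r = (r_1,…,r_n) be continuous on (−∞,t₀]. Then the Cauchy problem φ_k'(t) = F_k(t, φ_1(α_{11}(t)),…,φ_n(α_{nN}(t))) for t ≥ t₀, with φ_k(t) = r_k(t) for t ≤ t₀, has a unique solution: there exists a unique continuous vector function φ = (φ_1,…,φ_n) on ℝ such that φ_k(t) = r_k(t) for all t ≤ t₀ and φ_k(t) = r_k(t₀) + ∫_{t₀}^t F_k(τ, φ_1(α_{11}(τ)),…,φ_n(α_{nN}(τ))) dτ for all t ≥ t₀ and k = 1,…,n. -/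
/-!
Fixing a nonnegative locally integrable `h`, put `W t = exp (∫ τ in t₀..t, h τ)`. This weight is
continuous and monotone, and `∫ τ in t₀..t, h τ * W τ ≤ W t` because `W' = h * W` almost everywhere
(`integral_mul_expWeight_le`). If `h` dominates `2 n N f_k` for every `k`, then the Lipschitz
condition together with `α_{mj}(τ) ≤ τ` (so that `W (α_{mj} τ) ≤ W τ`) shows that the Volterra
operator halves distances measured relative to `W` (`volterra_contraction`).

*Existence.* Let `R` be the initial data frozen at time `t₀`. Adding the `|F_k(τ, R(α(τ)))|` to `h`
makes the operator send `R` to a function within `W`-bounded distance of `R`. Hence Banach's fixed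
point theorem applies in one stroke on the whole half-line, in the space of functions `R + W u` with
`u` bounded and continuous; no gluing of local solutions is needed.

*Uniqueness.* On `(-∞, T]` two solutions differ by at most `C * W`, and by the contraction estimate
then by at most `(C / 2 ^ p) * W` for every `p`.
-/

open MeasureTheory Set intervalIntegral

/-- Extension by zero turns local integrability on `[t₀, ∞)` into local integrability on `ℝ`. -/
lemma locallyIntegrable_indicator_Ici {t₀ : ℝ} {g : ℝ → ℝ}
    (hg : LocallyIntegrableOn g (Ici t₀)) : LocallyIntegrable ((Ici t₀).indicator g) := by
  rw [locallyIntegrableOn_iff_locallyIntegrable_restrict isClosed_Ici] at hg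
  intro x
  obtain ⟨s, hs, hi⟩ := hg x
  obtain ⟨u, hus, huo, hxu⟩ := mem_nhds_iff.mp hs
  refine ⟨u, huo.mem_nhds hxu, ?_⟩
  have := hi.mono_set hus
  rw [IntegrableOn, Measure.restrict_restrict huo.measurableSet] at this
  rw [IntegrableOn, integrable_indicator_iff measurableSet_Ici, IntegrableOn,
    Measure.restrict_restrict measurableSet_Ici, inter_comm]
  exact this

lemma intervalIntegrable_of_Ici {t₀ a b : ℝ} {g : ℝ → ℝ}
    (hg : LocallyIntegrableOn g (Ici t₀)) (ha : t₀ ≤ a) (hb : t₀ ≤ b) :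
    IntervalIntegrable g volume a b := by
  rw [intervalIntegrable_iff]
  refine (hg.integrableOn_compact_subset ?_ isCompact_uIcc).mono_set uIoc_subset_uIcc
  intro x hx
  exact (le_min ha hb).trans hx.1

lemma intervalIntegrable_of_locallyIntegrable {h : ℝ → ℝ} (hh : LocallyIntegrable h) (a b : ℝ) :
    IntervalIntegrable h volume a b :=
  intervalIntegrable_iff.mpr ((hh.integrableOn_isCompact isCompact_uIcc).mono_set uIoc_subset_uIcc)

/-- The exponential (Bielecki) weight `exp (∫ τ in t₀..t, h τ)`. -/
noncomputable def expWeight (t₀ : ℝ) (h : ℝ → ℝ) (t : ℝ) : ℝ := Real.exp (∫ τ in t₀..t, h τ)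

lemma expWeight_pos (t₀ : ℝ) (h : ℝ → ℝ) (t : ℝ) : 0 < expWeight t₀ h t := Real.exp_pos _

lemma continuous_expWeight (t₀ : ℝ) {h : ℝ → ℝ} (hh : LocallyIntegrable h) :
    Continuous (expWeight t₀ h) :=
  Real.continuous_exp.comp
    (continuous_primitive (intervalIntegrable_of_locallyIntegrable hh) t₀)

lemma monotone_expWeight (t₀ : ℝ) {h : ℝ → ℝ} (hh : LocallyIntegrable h) (h0 : ∀ t, 0 ≤ h t) :
    Monotone (expWeight t₀ h) := by
  intro s t hst
  refine Real.exp_le_exp.mpr ?_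
  have hi := intervalIntegrable_of_locallyIntegrable hh
  rw [← integral_add_adjacent_intervals (hi t₀ s) (hi s t)]
  linarith [integral_nonneg (μ := volume) hst fun τ _ => h0 τ]

lemma integral_mul_expWeight_le {t₀ t : ℝ} (ht : t₀ ≤ t) {h : ℝ → ℝ} (hh : LocallyIntegrable h)
    (h0 : ∀ t, 0 ≤ h t) : ∫ τ in t₀..t, h τ * expWeight t₀ h τ ≤ expWeight t₀ h t := by
  have hm := monotone_expWeight t₀ hh h0
  have hd : ∀ᵐ τ, deriv (expWeight t₀ h) τ = h τ * expWeight t₀ h τ := by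
    filter_upwards [LocallyIntegrable.ae_hasDerivAt_integral hh] with τ hτ
    rw [mul_comm]
    exact (hτ t₀).exp.deriv
  have hI := (hm.monotoneOn (uIcc t₀ t)).intervalIntegral_deriv_mem_uIcc
  rw [uIcc_of_le (sub_nonneg.mpr (hm ht))] at hI
  rw [← integral_congr_ae (hd.mono fun τ hτ _ => hτ)]
  linarith [hI.2, expWeight_pos t₀ h t₀]

/-- The Volterra operator halves distances measured relative to `expWeight t₀ h`, as soon as `h`
dominates `2 n N f_k`. Only values at times `≤ t` matter, by the retardation condition. -/
lemma volterra_contraction {t₀ : ℝ} {n N : ℕ}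
    {F : Fin n → ℝ → (Fin n → Fin N → ℝ) → ℝ} {f : Fin n → ℝ → ℝ} {α : Fin n → Fin N → ℝ → ℝ}
    (hf0 : ∀ k, ∀ t, t₀ ≤ t → 0 ≤ f k t)
    (hL : ∀ k, ∀ t, t₀ ≤ t → ∀ u v : Fin n → Fin N → ℝ,
        |F k t u - F k t v| ≤ f k t * ∑ m : Fin n, ∑ j : Fin N, |u m j - v m j|)
    (hLI : ∀ k, ∀ ψ : Fin n → Fin N → ℝ → ℝ, (∀ m j, Measurable (ψ m j)) →
        LocallyIntegrableOn (fun t => F k t fun m j => ψ m j t) (Set.Ici t₀))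
    (hα : ∀ m j, Measurable (α m j))
    (hRet : ∀ m j, ∀ t, t₀ ≤ t → α m j t ≤ t)
    {h : ℝ → ℝ} (hh : LocallyIntegrable h) (h0 : ∀ t, 0 ≤ h t)
    (hfh : ∀ k, ∀ t, t₀ ≤ t → 2 * (n * N) * f k t ≤ h t)
    {φ ψ : Fin n → ℝ → ℝ} (hφ : ∀ k, Continuous (φ k)) (hψ : ∀ k, Continuous (ψ k))
    {C t : ℝ} (hC : 0 ≤ C) (ht : t₀ ≤ t)
    (hd : ∀ m, ∀ s ≤ t, |φ m s - ψ m s| ≤ C * expWeight t₀ h s) (k : Fin n) :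
    |(∫ τ in t₀..t, F k τ fun m j => φ m (α m j τ)) - ∫ τ in t₀..t, F k τ fun m j => ψ m (α m j τ)|
      ≤ C / 2 * expWeight t₀ h t := by
  have iφ := intervalIntegrable_of_Ici
    (hLI k (fun m j τ => φ m (α m j τ)) fun m j => (hφ m).measurable.comp (hα m j)) le_rfl ht
  have iψ := intervalIntegrable_of_Ici
    (hLI k (fun m j τ => ψ m (α m j τ)) fun m j => (hψ m).measurable.comp (hα m j)) le_rfl ht
  have hm := monotone_expWeight t₀ hh h0
  rw [← integral_sub iφ iψ, ← Real.norm_eq_abs]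
  have hI : IntervalIntegrable (fun τ => C / 2 * (h τ * expWeight t₀ h τ)) volume t₀ t :=
    ((intervalIntegrable_of_locallyIntegrable hh t₀ t).mul_continuousOn
      (continuous_expWeight t₀ hh).continuousOn).const_mul _
  refine (norm_integral_le_of_norm_le ht (Filter.Eventually.of_forall fun τ hτ => ?_) hI).trans ?_
  · have hsum : ∑ m : Fin n, ∑ j : Fin N, |φ m (α m j τ) - ψ m (α m j τ)|
        ≤ ∑ m : Fin n, ∑ j : Fin N, C * expWeight t₀ h τ := by
      gcongr with m _ j _
      have hατ := hRet m j τ hτ.1.le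
      exact (hd m _ (hατ.trans hτ.2)).trans (mul_le_mul_of_nonneg_left (hm hατ) hC)
    calc ‖(F k τ fun m j => φ m (α m j τ)) - F k τ fun m j => ψ m (α m j τ)‖
        ≤ f k τ * ∑ m : Fin n, ∑ j : Fin N, C * expWeight t₀ h τ :=
          (hL k τ hτ.1.le _ _).trans (mul_le_mul_of_nonneg_left hsum (hf0 k τ hτ.1.le))
      _ = C / 2 * ((2 * (n * N) * f k τ) * expWeight t₀ h τ) := by
          simp only [Finset.sum_const, Finset.card_univ, Fintype.card_fin, nsmul_eq_mul]
          ring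
      _ ≤ C / 2 * (h τ * expWeight t₀ h τ) := by
          have := (expWeight_pos t₀ h τ).le
          gcongr
          exact hfh k τ hτ.1.le
  · rw [intervalIntegral.integral_const_mul]
    exact mul_le_mul_of_nonneg_left (integral_mul_expWeight_le ht hh h0) (by positivity)

theorem cauchy_problem_retarded (t₀ : ℝ) (n N : ℕ) (hn : 0 < n) (hN : 0 < N)
    (F : Fin n → ℝ → (Fin n → Fin N → ℝ) → ℝ)
    (f : Fin n → ℝ → ℝ)
    (α : Fin n → Fin N → ℝ → ℝ)
    -- continuity of F k t in u
    (hFcont : ∀ k, ∀ t, t₀ ≤ t → Continuous (F k t))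
    -- (L): the Lipschitz condition, with f k nonnegative and locally integrable
    (hf0 : ∀ k, ∀ t, t₀ ≤ t → 0 ≤ f k t)
    (hfloc : ∀ k, LocallyIntegrableOn (f k) (Set.Ici t₀))
    (hL : ∀ k, ∀ t, t₀ ≤ t → ∀ u v : Fin n → Fin N → ℝ,
        |F k t u - F k t v| ≤ f k t * ∑ m : Fin n, ∑ j : Fin N, |u m j - v m j|)
    -- (LI): local integrability of superpositions
    (hLI : ∀ k, ∀ ψ : Fin n → Fin N → ℝ → ℝ, (∀ m j, Measurable (ψ m j)) →
        LocallyIntegrableOn (fun t => F k t fun m j => ψ m j t) (Set.Ici t₀))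
    -- α measurable and (Ret): the retardation condition
    (hα : ∀ m j, Measurable (α m j))
    (hRet : ∀ m j, ∀ t, t₀ ≤ t → α m j t ≤ t)
    -- initial data, continuous on (-∞, t₀]
    (r : Fin n → ℝ → ℝ) (hr : ∀ k, ContinuousOn (r k) (Set.Iic t₀)) :
    ∃! φ : Fin n → ℝ → ℝ,
      (∀ k, Continuous (φ k)) ∧
      (∀ k, ∀ t ≤ t₀, φ k t = r k t) ∧
      (∀ k, ∀ t, t₀ ≤ t →
        φ k t = r k t₀ + ∫ τ in t₀..t, F k τ fun m j => φ m (α m j τ)) := by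
  -- `R` is the initial data, frozen at time `t₀`
  set R : Fin n → ℝ → ℝ := fun k t => r k (min t t₀) with hR
  have hRc : ∀ k, Continuous (R k) := fun k =>
    (hr k).comp_continuous (continuous_id.min continuous_const) fun t => min_le_right t t₀
  have hlocF : ∀ φ : Fin n → ℝ → ℝ, (∀ k, Continuous (φ k)) → ∀ k,
      LocallyIntegrableOn (fun τ => F k τ fun m j => φ m (α m j τ)) (Ici t₀) := fun φ hφ k =>
    hLI k (fun m j τ => φ m (α m j τ)) fun m j => (hφ m).measurable.comp (hα m j)
  -- a rate dominating both the Lipschitz constants and the residual of `R`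
  set h : ℝ → ℝ := fun t => ∑ k, (Ici t₀).indicator
    (fun τ => 2 * (n * N) * f k τ + |F k τ fun m j => R m (α m j τ)|) t with hdef
  have hterm : ∀ k t, 0 ≤ (Ici t₀).indicator
      (fun τ => 2 * (n * N) * f k τ + |F k τ fun m j => R m (α m j τ)|) t := fun k t =>
    indicator_nonneg (fun τ hτ => by have := hf0 k τ hτ; positivity) t
  have h0 : ∀ t, 0 ≤ h t := fun t => Finset.sum_nonneg fun k _ => hterm k t
  have hh : LocallyIntegrable h := by
    refine locallyIntegrable_finsetSum _ fun k _ => locallyIntegrable_indicator_Ici ?_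
    exact ((hfloc k).smul (2 * (n * N) : ℝ)).add (hlocF R hRc k).norm
  have hdom : ∀ k, ∀ t, t₀ ≤ t →
      2 * (n * N) * f k t + |F k t fun m j => R m (α m j t)| ≤ h t := by
    intro k t ht
    have := Finset.single_le_sum (fun k _ => hterm k t) (Finset.mem_univ k)
    rwa [indicator_of_mem (mem_Ici.mpr ht)] at this
  have hfh : ∀ k, ∀ t, t₀ ≤ t → 2 * (n * N) * f k t ≤ h t := fun k t ht =>
    (le_add_of_nonneg_right (abs_nonneg _)).trans (hdom k t ht)
  have hFh : ∀ k, ∀ t, t₀ ≤ t → |F k t fun m j => R m (α m j t)| ≤ h t := fun k t ht =>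
    (le_add_of_nonneg_left (by have := hf0 k t ht; positivity)).trans (hdom k t ht)
  set W := expWeight t₀ h with hW
  have hWpos : ∀ t, 0 < W t := expWeight_pos t₀ h
  have hWc : Continuous W := continuous_expWeight t₀ hh
  have hcontr := @volterra_contraction t₀ n N F f α hf0 hL hLI hα hRet h hh h0 hfh
  rw [← hW] at hcontr
  -- `u ↦ R + W u` parametrizes the functions at `W`-bounded distance from `R`
  let S : (BoundedContinuousFunction ℝ (Fin n → ℝ)) → Fin n → ℝ → ℝ :=
    fun u k t => R k t + W t * u t k
  have hSc : ∀ u k, Continuous (S u k) := fun u k =>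
    (hRc k).add (hWc.mul ((continuous_apply k).comp u.continuous))
  let I : (Fin n → ℝ → ℝ) → Fin n → ℝ → ℝ :=
    fun φ k t => ∫ τ in t₀..max t t₀, F k τ fun m j => φ m (α m j τ)
  have hIc : ∀ φ : Fin n → ℝ → ℝ, (∀ k, Continuous (φ k)) → ∀ k, Continuous (I φ k) := by
    intro φ hφ k
    have hc := (continuous_primitive (intervalIntegrable_of_locallyIntegrable
      (locallyIntegrable_indicator_Ici (hlocF φ hφ k))) t₀).comp
        (continuous_id.max (continuous_const (y := t₀)))
    refine hc.congr fun t => integral_congr fun τ hτ => ?_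
    change τ ∈ uIcc t₀ (max t t₀) at hτ
    rw [uIcc_of_le (le_max_right t t₀)] at hτ
    exact indicator_of_mem (mem_Ici.mpr hτ.1) _
  have hIlip : ∀ φ ψ : Fin n → ℝ → ℝ, (∀ k, Continuous (φ k)) → (∀ k, Continuous (ψ k)) →
      ∀ C, 0 ≤ C → (∀ m s, |φ m s - ψ m s| ≤ C * W s) → ∀ k t,
      |I φ k t - I ψ k t| ≤ C / 2 * W t := by
    intro φ ψ hφ hψ C hC hd k t
    rcases le_total t₀ t with ht | ht
    · simp only [I, max_eq_left ht]
      exact hcontr hφ hψ hC ht (fun m s _ => hd m s) k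
    · simp only [I, max_eq_right ht, integral_same, sub_self, abs_zero]
      have := hWpos t
      positivity
  have hIR : ∀ k t, |I R k t| ≤ W t := by
    intro k t
    rcases le_total t₀ t with ht | ht
    · simp only [I, max_eq_left ht]
      have hb : |∫ τ in t₀..t, F k τ fun m j => R m (α m j τ)| ≤ ∫ τ in t₀..t, h τ := by
        rw [← Real.norm_eq_abs]
        exact norm_integral_le_of_norm_le ht
          (Filter.Eventually.of_forall fun τ hτ => hFh k τ hτ.1.le)
          (intervalIntegrable_of_locallyIntegrable hh t₀ t)
      refine hb.trans ?_
      have := Real.add_one_le_exp (∫ τ in t₀..t, h τ)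
      rw [hW, expWeight]
      linarith
    · simp only [I, max_eq_right ht, integral_same, abs_zero]
      exact (hWpos t).le
  have hSdiff : ∀ u v m s, |S u m s - S v m s| ≤ dist u v * W s := by
    intro u v m s
    have h1 : |u s m - v s m| ≤ dist u v :=
      (dist_le_pi_dist (u s) (v s) m).trans (BoundedContinuousFunction.dist_coe_le_dist s)
    have h2 : S u m s - S v m s = W s * (u s m - v s m) := by simp only [S]; ring
    rw [h2, abs_mul, abs_of_pos (hWpos s), mul_comm]
    exact mul_le_mul_of_nonneg_right h1 (hWpos s).le
  have hS0 : S 0 = R := by funext k t; simp [S]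
  have hTbound : ∀ u t, ‖fun k => (W t)⁻¹ * I (S u) k t‖ ≤ dist u 0 / 2 + 1 := by
    intro u t
    refine (pi_norm_le_iff_of_nonneg (by positivity)).mpr fun k => ?_
    rw [Real.norm_eq_abs, abs_mul, abs_of_pos (inv_pos.mpr (hWpos t)), inv_mul_le_iff₀ (hWpos t)]
    have h1 := hIlip _ _ (hSc u) (hSc 0) _ dist_nonneg (hSdiff u 0) k t
    rw [hS0] at h1
    have h2 := abs_sub_abs_le_abs_sub (I (S u) k t) (I R k t)
    linarith [hIR k t]
  let T : BoundedContinuousFunction ℝ (Fin n → ℝ) → BoundedContinuousFunction ℝ (Fin n → ℝ) :=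
    fun u => BoundedContinuousFunction.ofNormedAddCommGroup
      (fun t k => (W t)⁻¹ * I (S u) k t)
      (continuous_pi fun k => (hWc.inv₀ fun t => (hWpos t).ne').mul (hIc _ (hSc u) k))
      (dist u 0 / 2 + 1) (hTbound u)
  have hTapp : ∀ u t k, T u t k = (W t)⁻¹ * I (S u) k t := fun _ _ _ => rfl
  have hT : ContractingWith (1 / 2) T := by
    refine ⟨by norm_num, LipschitzWith.of_dist_le_mul fun u v => ?_⟩
    have hnn : 0 ≤ ((1 / 2 : NNReal) : ℝ) * dist u v := by positivity
    refine (BoundedContinuousFunction.dist_le hnn).mpr fun t => (dist_pi_le_iff hnn).mpr fun k => ?_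
    rw [Real.dist_eq, hTapp, hTapp, ← mul_sub, abs_mul, abs_of_pos (inv_pos.mpr (hWpos t)),
      inv_mul_le_iff₀ (hWpos t)]
    refine (hIlip _ _ (hSc u) (hSc v) _ dist_nonneg (hSdiff u v) k t).trans (le_of_eq ?_)
    push_cast
    ring
  obtain ⟨u, hu⟩ : ∃ u, T u = u := ⟨_, hT.fixedPoint_isFixedPt⟩
  have hSu : ∀ k t, S u k t = R k t + I (S u) k t := by
    intro k t
    have h1 := hTapp u t k
    rw [hu] at h1
    change R k t + W t * u t k = _
    rw [h1, mul_inv_cancel_left₀ (hWpos t).ne']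
  have hr_Su : ∀ k, ∀ t ≤ t₀, S u k t = r k t := fun k t ht => by
    rw [hSu]
    simp only [I, R, max_eq_right ht, min_eq_left ht, integral_same, add_zero]
  have hi_Su : ∀ k, ∀ t, t₀ ≤ t →
      S u k t = r k t₀ + ∫ τ in t₀..t, F k τ fun m j => S u m (α m j τ) := fun k t ht => by
    rw [hSu]
    simp only [I, R, max_eq_left ht, min_eq_right ht]
  refine ⟨S u, ⟨hSc u, hr_Su, hi_Su⟩, ?_⟩
  rintro φ ⟨hφc, hφr, hφi⟩
  funext k T'
  rcases le_total T' t₀ with hT' | hT'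
  · rw [hφr k T' hT', hr_Su k T' hT']
  obtain ⟨C, hC⟩ := isCompact_Icc.exists_bound_of_continuousOn (s := Icc t₀ T')
    (f := fun s m => φ m s - S u m s)
    (continuous_pi fun m => (hφc m).sub (hSc u m)).continuousOn
  have hC0 : 0 ≤ C := (norm_nonneg _).trans (hC t₀ ⟨le_rfl, hT'⟩)
  have key : ∀ p : ℕ, ∀ m, ∀ s ≤ T', |φ m s - S u m s| ≤ C / 2 ^ p * W s := by
    intro p
    induction p with
    | zero =>
      intro m s hs
      rcases le_total s t₀ with hs0 | hs0
      · rw [hφr m s hs0, hr_Su m s hs0, sub_self, abs_zero]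
        have := hWpos s
        positivity
      · have h1 : 1 ≤ W s := Real.one_le_exp (integral_nonneg hs0 fun τ _ => h0 τ)
        have h2 := (norm_le_pi_norm (fun m => φ m s - S u m s) m).trans (hC s ⟨hs0, hs⟩)
        rw [Real.norm_eq_abs] at h2
        rw [pow_zero, div_one]
        nlinarith
    | succ p ih =>
      intro m s hs
      rcases le_total s t₀ with hs0 | hs0
      · rw [hφr m s hs0, hr_Su m s hs0, sub_self, abs_zero]
        have := hWpos s
        positivity
      · rw [hφi m s hs0, hi_Su m s hs0, add_sub_add_left_eq_sub]
        refine (hcontr hφc (hSc u) (by positivity) hs0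
          (fun m s' hs' => ih m s' (hs'.trans hs)) m).trans (le_of_eq ?_)
        rw [pow_succ, div_div]
  have hlim : Filter.Tendsto (fun p : ℕ => C / 2 ^ p * W T') Filter.atTop (nhds 0) := by
    have := ((tendsto_pow_atTop_nhds_zero_of_lt_one (r := (1 / 2 : ℝ)) (by norm_num)
      (by norm_num)).const_mul C).mul_const (W T')
    simpa [div_eq_mul_inv] using this
  have hle := ge_of_tendsto' hlim fun p => key p k T' le_rfl
  exact sub_eq_zero.mp (abs_eq_zero.mp (le_antisymm hle (abs_nonneg _)))
end

section
/- Assume conditions (L), (LI) and (Ret), and let T > t₀. If φ = (φ_1,…,φ_n) is a continuous vector function on (−∞,T] with φ_k(t) = r_k(t) for t ≤ t₀ satisfying φ_k(t) = r_k(t₀) + ∫_{t₀}^t F_k(τ, φ_1(α_{11}(τ)),…,φ_n(α_{nN}(τ))) dτ for all t ∈ [t₀,T], then there exist ε > 0 and a continuous vector function φ̃ on (−∞,T+ε] that coincides with φ on (−∞,T] and satisfies the same integral equation for all t ∈ [t₀,T+ε]; in other words, no solution of the Cauchy problem has a finite maximum existence interval. -/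
/-!
Continuation by the contraction principle on a short interval `[T, T + ε]`. The unknown is the
increment `y` of the solution past `T`, an arbitrary element of `C([T, T + ε], ℝⁿ)`. It determines the
function `s ↦ φ (min s T) + y s` (with `y` extended by constants), which is continuous on all of
`ℝ`, so that (LI) makes the superposition integrable and the operator
`y ↦ (t ↦ ∫_T^t F (τ, φ (min (α τ) T) + y (α τ)) dτ)` is well defined. By (L) its Lipschitz constant
is at most `n N max_k ∫_T^{T+ε} f_k`, which is below `1 / 2` for small `ε`. The fixed point satisfies
`y T = 0` automatically, so the associated function agrees with `φ` on `(-∞, T]`; by (Ret) the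
integrand on `[t₀, T]` only sees those values, and the integral equation follows by splitting the
integral at `T`.
-/

open MeasureTheory Set intervalIntegral

open scoped Topology

/-- The candidate continuation attached to an increment `y` on `[a, b]`: frozen at the value `φ a` past
`a`, plus `y` extended by constants. It equals `φ` on `(-∞, a]` only when `y a = 0`. -/
noncomputable def glue {n : ℕ} {a b : ℝ} (h : a ≤ b) (φ : Fin n → ℝ → ℝ) (y : C(Icc a b, Fin n → ℝ))
    (m : Fin n) (s : ℝ) : ℝ :=
  φ m (min s a) + y (projIcc a b h s) m

lemma glue_continuous {n : ℕ} {a b : ℝ} (h : a ≤ b) (φ : Fin n → ℝ → ℝ)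
    (hφ : ∀ k, ContinuousOn (φ k) (Iic a)) (y : C(Icc a b, Fin n → ℝ)) (m : Fin n) :
    Continuous (glue h φ y m) := by
  have h1 : Continuous fun s : ℝ => φ m (min s a) :=
    (hφ m).comp_continuous (by fun_prop) fun s => min_le_right s a
  have h2 : Continuous fun s : ℝ => y (projIcc a b h s) m :=
    (continuous_apply m).comp (y.continuous.comp continuous_projIcc)
  exact h1.add h2

lemma abs_glue_sub_le {n : ℕ} {a b : ℝ} (h : a ≤ b) (φ : Fin n → ℝ → ℝ)
    (y z : C(Icc a b, Fin n → ℝ)) (m : Fin n) (s : ℝ) :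
    |glue h φ y m s - glue h φ z m s| ≤ dist y z := by
  have h1 : glue h φ y m s - glue h φ z m s
      = y (projIcc a b h s) m - z (projIcc a b h s) m := by
    unfold glue; ring
  rw [h1, ← Real.dist_eq]
  exact (dist_le_pi_dist _ _ m).trans (ContinuousMap.dist_apply_le_dist _)

/-- Absolute continuity of the integral, uniformly over finitely many integrands. -/
lemma exists_short_interval {n : ℕ} (f : Fin n → ℝ → ℝ) (T : ℝ)
    (hf : ∀ k, IntervalIntegrable (f k) volume T (T + 1)) (C : ℝ) :
    ∃ ε > 0, ∀ k, C * ∫ τ in T..T + ε, f k τ < 1 / 2 := by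
  have h1 : ∀ k, ∀ᶠ t in 𝓝[>] T, C * ∫ τ in T..t, f k τ < 1 / 2 := by
    intro k
    have hc : ContinuousOn (fun t => ∫ τ in T..t, f k τ) (uIcc T (T + 1)) :=
      continuousOn_primitive_interval' (hf k) left_mem_uIcc
    rw [uIcc_of_le (by linarith)] at hc
    have hw := ((hc T ⟨le_rfl, by linarith⟩).const_mul C).tendsto
    rw [integral_same, mul_zero] at hw
    have hle : 𝓝[>] T ≤ 𝓝[Icc T (T + 1)] T := by
      rw [← nhdsWithin_Ioo_eq_nhdsGT (show T < T + 1 by linarith)]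
      exact nhdsWithin_mono _ Ioo_subset_Icc_self
    exact (hw.mono_left hle).eventually (gt_mem_nhds (by norm_num))
  obtain ⟨t, ht, hT⟩ := ((Filter.eventually_all.2 h1).and self_mem_nhdsWithin).exists
  have hT' : T < t := hT
  exact ⟨t - T, by linarith, fun k => by simpa using ht k⟩

theorem continuation_retarded (t₀ : ℝ) (n N : ℕ) (hn : 0 < n) (hN : 0 < N)
    (F : Fin n → ℝ → (Fin n → Fin N → ℝ) → ℝ)
    (f : Fin n → ℝ → ℝ)
    (α : Fin n → Fin N → ℝ → ℝ)
    -- continuity of F k t in u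
    (hFcont : ∀ k, ∀ t, t₀ ≤ t → Continuous (F k t))
    -- (L): the Lipschitz condition, with f k nonnegative and locally integrable
    (hf0 : ∀ k, ∀ t, t₀ ≤ t → 0 ≤ f k t)
    (hfloc : ∀ k, LocallyIntegrableOn (f k) (Set.Ici t₀))
    (hL : ∀ k, ∀ t, t₀ ≤ t → ∀ u v : Fin n → Fin N → ℝ,
        |F k t u - F k t v| ≤ f k t * ∑ m : Fin n, ∑ j : Fin N, |u m j - v m j|)
    -- (LI): local integrability of superpositions
    (hLI : ∀ k, ∀ ψ : Fin n → Fin N → ℝ → ℝ, (∀ m j, Measurable (ψ m j)) →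
        LocallyIntegrableOn (fun t => F k t fun m j => ψ m j t) (Set.Ici t₀))
    -- α measurable and (Ret): the retardation condition
    (hα : ∀ m j, Measurable (α m j))
    (hRet : ∀ m j, ∀ t, t₀ ≤ t → α m j t ≤ t)
    -- initial data, continuous on (-∞, t₀]
    (r : Fin n → ℝ → ℝ) (hr : ∀ k, ContinuousOn (r k) (Set.Iic t₀))
    -- a solution on (-∞, T]
    (T : ℝ) (hT : t₀ < T)
    (φ : Fin n → ℝ → ℝ)
    (hφc : ∀ k, ContinuousOn (φ k) (Set.Iic T))
    (hφr : ∀ k, ∀ t ≤ t₀, φ k t = r k t)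
    (hφeq : ∀ k, ∀ t ∈ Set.Icc t₀ T,
        φ k t = r k t₀ + ∫ τ in t₀..t, F k τ fun m j => φ m (α m j τ)) :
    ∃ ε > 0, ∃ φ' : Fin n → ℝ → ℝ,
      (∀ k, ContinuousOn (φ' k) (Set.Iic (T + ε))) ∧
      (∀ k, ∀ t ≤ T, φ' k t = φ k t) ∧
      (∀ k, ∀ t ∈ Set.Icc t₀ (T + ε),
        φ' k t = r k t₀ + ∫ τ in t₀..t, F k τ fun m j => φ' m (α m j τ)) := by
  have hint : ∀ (g : ℝ → ℝ), LocallyIntegrableOn g (Ici t₀) → ∀ a b, t₀ ≤ a → t₀ ≤ b →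
      IntervalIntegrable g volume a b := by
    intro g hg a b ha hb
    rw [intervalIntegrable_iff']
    refine hg.integrableOn_compact_subset ?_ isCompact_uIcc
    intro x hx
    exact (le_min ha hb).trans hx.1
  obtain ⟨ε, hε, hsmall⟩ := exists_short_interval f T
    (fun k => hint _ (hfloc k) _ _ hT.le (by linarith)) ((n : ℝ) * N)
  have hab : T ≤ T + ε := by linarith
  have hgm : ∀ (y : C(Icc T (T + ε), Fin n → ℝ)) m j,
      Measurable fun τ => glue hab φ y m (α m j τ) := fun y m j =>
    (glue_continuous hab φ hφc y m).measurable.comp (hα m j)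
  have hFint : ∀ (y : C(Icc T (T + ε), Fin n → ℝ)) k a b, t₀ ≤ a → t₀ ≤ b →
      IntervalIntegrable (fun τ => F k τ fun m j => glue hab φ y m (α m j τ)) volume a b :=
    fun y k a b ha hb => hint _ (hLI k _ (hgm y)) a b ha hb
  let Φ : C(Icc T (T + ε), Fin n → ℝ) → C(Icc T (T + ε), Fin n → ℝ) := fun y =>
    { toFun := fun t k => ∫ τ in T..(t : ℝ), F k τ fun m j => glue hab φ y m (α m j τ)
      continuous_toFun := by
        refine continuous_pi fun k => ?_
        have hc := continuousOn_primitive_interval'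
          (hFint y k T (T + ε) hT.le (by linarith)) left_mem_uIcc
        rw [uIcc_of_le hab] at hc
        exact continuousOn_iff_continuous_domRestrict.1 hc }
  have hΦ : ContractingWith (1 / 2) Φ := by
    refine ⟨by rw [← NNReal.coe_lt_coe]; norm_num, LipschitzWith.of_dist_le_mul fun y z => ?_⟩
    have hd : 0 ≤ dist y z := dist_nonneg
    refine (ContinuousMap.dist_le (by positivity)).2 fun t => ?_
    refine (dist_pi_le_iff (by positivity)).2 fun k => ?_
    have htT : T ≤ (t : ℝ) := t.2.1
    have ht0 : t₀ ≤ (t : ℝ) := hT.le.trans htT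
    have hfi := hint _ (hfloc k) T t hT.le ht0
    have hfi' := hint _ (hfloc k) t (T + ε) ht0 (by linarith)
    have hbound : ∀ τ ∈ Ioc T (t : ℝ),
        ‖(F k τ fun m j => glue hab φ y m (α m j τ))
          - F k τ fun m j => glue hab φ z m (α m j τ)‖ ≤ f k τ * ((n * N) * dist y z) := by
      intro τ hτ
      have hτ0 : t₀ ≤ τ := hT.le.trans hτ.1.le
      rw [Real.norm_eq_abs]
      refine (hL k τ hτ0 _ _).trans (mul_le_mul_of_nonneg_left ?_ (hf0 k τ hτ0))
      calc _ ≤ ∑ m : Fin n, ∑ j : Fin N, dist y z :=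
            Finset.sum_le_sum fun m _ => Finset.sum_le_sum fun j _ => abs_glue_sub_le hab φ y z m _
        _ = _ := by simp [mul_assoc]
    have hmono : ∫ τ in T..(t : ℝ), f k τ ≤ ∫ τ in T..T + ε, f k τ := by
      rw [← integral_add_adjacent_intervals hfi hfi']
      have : 0 ≤ ∫ τ in (t : ℝ)..T + ε, f k τ :=
        integral_nonneg t.2.2 fun τ hτ => hf0 k τ (ht0.trans hτ.1)
      linarith
    have hC : 0 ≤ (n : ℝ) * N := by positivity
    calc dist (Φ y t k) (Φ z t k)
        = ‖∫ τ in T..(t : ℝ), ((F k τ fun m j => glue hab φ y m (α m j τ))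
          - F k τ fun m j => glue hab φ z m (α m j τ))‖ := by
          rw [integral_sub (hFint y k T t hT.le ht0) (hFint z k T t hT.le ht0), dist_eq_norm]
          rfl
      _ ≤ ∫ τ in T..(t : ℝ), f k τ * ((n * N) * dist y z) :=
          norm_integral_le_of_norm_le htT (Filter.Eventually.of_forall hbound)
            (hfi.mul_const _)
      _ = (n * N * ∫ τ in T..(t : ℝ), f k τ) * dist y z := by
          rw [intervalIntegral.integral_mul_const]; ring
      _ ≤ (1 / 2) * dist y z := by
          refine mul_le_mul_of_nonneg_right ?_ hd
          exact (mul_le_mul_of_nonneg_left hmono hC).trans (hsmall k).le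
      _ = _ := by norm_num
  have : Nonempty C(Icc T (T + ε), Fin n → ℝ) := ⟨0⟩
  obtain ⟨y, hy⟩ : ∃ y, Φ y = y := ⟨_, hΦ.fixedPoint_isFixedPt⟩
  have hyt : ∀ (t : Icc T (T + ε)) k,
      y t k = ∫ τ in T..(t : ℝ), F k τ fun m j => glue hab φ y m (α m j τ) := fun t k =>
    (congrFun (DFunLike.congr_fun hy t) k).symm
  -- the integral defining `y` at the left endpoint is over an empty interval
  have hold : ∀ k, ∀ t ≤ T, glue hab φ y k t = φ k t := by
    intro k t ht
    rw [glue, min_eq_left ht, projIcc_of_le_left hab ht, hyt]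
    simp
  have heqT : ∀ k, ∀ t ∈ Icc t₀ T, ∫ τ in t₀..t, F k τ (fun m j => glue hab φ y m (α m j τ))
      = ∫ τ in t₀..t, F k τ fun m j => φ m (α m j τ) := by
    intro k t ht
    refine integral_congr fun τ hτ => ?_
    rw [uIcc_of_le ht.1] at hτ
    have h1 : (fun m j => glue hab φ y m (α m j τ)) = fun m j => φ m (α m j τ) := by
      funext m j
      exact hold m _ ((hRet m j τ hτ.1).trans (hτ.2.trans ht.2))
    simp only [h1]
  refine ⟨ε, hε, glue hab φ y, fun k => (glue_continuous hab φ hφc y k).continuousOn, hold, ?_⟩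
  intro k t ht
  rcases le_total t T with htT | htT
  · rw [hold k t htT, heqT k t ⟨ht.1, htT⟩, hφeq k t ⟨ht.1, htT⟩]
  · rw [← integral_add_adjacent_intervals (hFint y k t₀ T le_rfl hT.le) (hFint y k T t hT.le ht.1),
      heqT k T ⟨hT.le, le_rfl⟩, ← add_assoc, ← hφeq k T ⟨hT.le, le_rfl⟩, glue, min_eq_right htT,
      projIcc_of_mem hab ⟨htT, ht.2⟩, hyt]
end

section
/- Assume conditions (L*), (LI*) and (Adv), and let s = (s_1,…,s_n) be continuous on [τ₀,∞). Then the Cauchy co-problem φ_k'(t) = G_k(t, φ_1(β_{11}(t)),…,φ_n(β_{nN}(t))) for t ≤ τ₀, with terminal conditions φ_k(t) = s_k(t) for t ≥ τ₀, has a unique solution: there exists a unique continuous vector function φ = (φ_1,…,φ_n) on ℝ such that φ_k(t) = s_k(t) for all t ≥ τ₀ and φ_k(t) = s_k(τ₀) + ∫_t^{τ₀} G_k(τ, φ_1(β_{11}(τ)),…,φ_n(β_{nN}(τ))) dτ for all t ≤ τ₀ and k = 1,…,n. -/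
/-!
For `t ≤ τ₀` the value `G k t (φ (β t))` only involves `φ` on `[t, ∞)`, by the advance condition.
After replacing `s` by its constant continuation to the left of `τ₀` and `G` by zero to the right
of `τ₀`, the co-problem becomes one causal Volterra equation on the whole line,
`φ k t = σ k t + ∫ τ in t..τ₀, F φ k τ`, in which `|F φ k t - F ψ k t| ≤ H t * w` as soon as
`|φ - ψ| ≤ w` on `[t, ∞)`.

This equation is solved by Picard iteration with a single weight for the whole line
(Bielecki's device). Let `W` be nonnegative, antitone and such that
`∫ τ in t..τ₀, H τ * W τ ≤ W t / 2` for `t ≤ τ₀`. Then the Picard operator halves every bound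
`|φ - ψ| ≤ c * W` (`picard_contract`). By `exists_weight` such a `W` exists, and can moreover be
chosen to dominate any given primitive `t ↦ ∫ τ in t..τ₀, E τ`: one takes
`W t = (∫ τ in t..τ₀, E τ) * exp (2 * ∫ τ in t..τ₀, H τ)`. With `W` dominating the first Picard
step, the iterates converge locally uniformly to a solution; with `W` dominating the difference of
two solutions, that difference is at most `W / 2 ^ i` for every `i`, hence zero
(`volterra_existsUnique`). No restriction to compact intervals and no gluing is needed.
-/

open MeasureTheory Set intervalIntegral

lemma continuous_integral_left (τ₀ : ℝ) (f : ℝ → ℝ)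
    (hf : ∀ a b, IntervalIntegrable f volume a b) :
    Continuous fun t => ∫ x in t..τ₀, f x := by
  have : (fun t => ∫ x in t..τ₀, f x) = fun t => -∫ x in τ₀..t, f x := by
    funext t
    rw [integral_symm]
  rw [this]
  exact (continuous_primitive hf τ₀).neg

lemma antitone_integral_left (τ₀ : ℝ) (f : ℝ → ℝ)
    (hf : ∀ a b, IntervalIntegrable f volume a b) (hf0 : ∀ x, 0 ≤ f x) :
    Antitone fun t => ∫ x in t..τ₀, f x := by
  intro x y hxy
  have h1 := integral_add_adjacent_intervals (hf x y) (hf y τ₀)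
  have h2 : 0 ≤ ∫ z in x..y, f z := integral_nonneg_of_forall hxy hf0
  simp only
  linarith

lemma integral_eq_zero_of_ge (τ₀ t : ℝ) (ht : τ₀ ≤ t) (f : ℝ → ℝ)
    (hf : ∀ x, τ₀ < x → f x = 0) : ∫ x in t..τ₀, f x = 0 := by
  have : ∫ x in t..τ₀, f x = ∫ x in t..τ₀, (0 : ℝ) := by
    refine integral_congr_ae (Filter.Eventually.of_forall fun x hx => ?_)
    rw [uIoc_of_ge ht] at hx
    exact hf x hx.1
  simp [this]

/-- The inequality behind the exponential weight. Since `H` is only integrable, the exponential is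
not a classical primitive of the integrand; the bound follows from
`∫ deriv f ≤ f b - f a` for monotone `f`, together with Lebesgue differentiation. -/
lemma integral_mul_exp_le (τ₀ t : ℝ) (ht : t ≤ τ₀) (H : ℝ → ℝ)
    (hH : ∀ a b, IntervalIntegrable H volume a b) (hH0 : ∀ x, 0 ≤ H x) :
    ∫ x in t..τ₀, H x * Real.exp (2 * ∫ y in x..τ₀, H y) ≤
      Real.exp (2 * ∫ y in t..τ₀, H y) / 2 := by
  set A : ℝ → ℝ := fun x => ∫ y in x..τ₀, H y with hA
  have hAanti : Antitone A := antitone_integral_left τ₀ H hH hH0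
  set f : ℝ → ℝ := fun x => -(Real.exp (2 * A x) / 2) with hf
  have hfm : Monotone f := by
    intro x y hxy
    have := Real.exp_le_exp.2 (mul_le_mul_of_nonneg_left (hAanti hxy) zero_le_two)
    simp only [hf]
    linarith
  have hle := (hfm.monotoneOn (uIcc t τ₀)).intervalIntegral_deriv_mem_uIcc
  rw [uIcc_of_le (sub_nonneg.2 (hfm ht))] at hle
  have hae := (hH t τ₀).ae_hasDerivAt_integral
  have heq : ∫ x in t..τ₀, H x * Real.exp (2 * A x) = ∫ x in t..τ₀, deriv f x := by
    refine integral_congr_ae ?_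
    filter_upwards [hae] with x hx hxm
    have hd := hx (uIoc_subset_uIcc hxm) τ₀ right_mem_uIcc
    have hA' : HasDerivAt A (-H x) x := by
      have : A = fun x => -∫ y in τ₀..x, H y := by
        funext z
        simp only [hA]
        rw [integral_symm]
      rw [this]
      exact hd.neg
    have := ((hA'.const_mul 2).exp.div_const 2).neg
    rw [show deriv f x = _ from this.deriv]
    ring
  rw [heq]
  refine hle.2.trans ?_
  have : 0 ≤ Real.exp (2 * A τ₀) := (Real.exp_pos _).le
  simp only [hf]
  linarith

/-- Existence of a Bielecki weight `W` adapted to the Lipschitz coefficient `H` and dominating the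
primitive of `E`. -/
lemma exists_weight (τ₀ : ℝ) (H E : ℝ → ℝ)
    (hH : ∀ a b, IntervalIntegrable H volume a b) (hH0 : ∀ x, 0 ≤ H x)
    (hE : ∀ a b, IntervalIntegrable E volume a b) (hE0 : ∀ x, 0 ≤ E x)
    (hEz : ∀ x, τ₀ < x → E x = 0) :
    ∃ W : ℝ → ℝ, Continuous W ∧ Antitone W ∧ (∀ t, 0 ≤ W t) ∧
      (∀ t, t ≤ τ₀ → ∫ x in t..τ₀, E x ≤ W t) ∧
      (∀ t, t ≤ τ₀ → ∫ x in t..τ₀, H x * W x ≤ W t / 2) := by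
  set A : ℝ → ℝ := fun x => ∫ y in x..τ₀, H y with hA
  set B : ℝ → ℝ := fun x => ∫ y in x..τ₀, E y with hB
  have hAanti : Antitone A := antitone_integral_left τ₀ H hH hH0
  have hBanti : Antitone B := antitone_integral_left τ₀ E hE hE0
  have hB0 : ∀ t, 0 ≤ B t := by
    intro t
    rcases le_total t τ₀ with h | h
    · exact integral_nonneg_of_forall h hE0
    · exact (integral_eq_zero_of_ge τ₀ t h E hEz).ge
  have hAc : Continuous A := continuous_integral_left τ₀ H hH
  have hBc : Continuous B := continuous_integral_left τ₀ E hE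
  have hec : Continuous fun t => Real.exp (2 * A t) := by fun_prop
  refine ⟨fun t => B t * Real.exp (2 * A t), hBc.mul hec, ?_, ?_, ?_, ?_⟩
  · intro x y hxy
    have := Real.exp_le_exp.2 (mul_le_mul_of_nonneg_left (hAanti hxy) zero_le_two)
    exact mul_le_mul (hBanti hxy) this (Real.exp_pos _).le (hB0 x)
  · exact fun t => mul_nonneg (hB0 t) (Real.exp_pos _).le
  · intro t ht
    have hA0 : 0 ≤ A t := integral_nonneg_of_forall ht hH0
    exact le_mul_of_one_le_right (hB0 t) (Real.one_le_exp (by linarith))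
  · intro t ht
    have h1 : ∫ x in t..τ₀, H x * (B x * Real.exp (2 * A x)) ≤
        ∫ x in t..τ₀, B t * (H x * Real.exp (2 * A x)) := by
      refine integral_mono_on ht ((hH t τ₀).mul_continuousOn (hBc.mul hec).continuousOn)
        (((hH t τ₀).mul_continuousOn hec.continuousOn).const_mul _) fun x hx => ?_
      have h2 := mul_le_mul_of_nonneg_right (hBanti hx.1)
        (mul_nonneg (hH0 x) (Real.exp_pos (2 * A x)).le)
      linarith
    rw [intervalIntegral.integral_const_mul] at h1
    have h3 := mul_le_mul_of_nonneg_left (integral_mul_exp_le τ₀ t ht H hH hH0) (hB0 t)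
    refine h1.trans (h3.trans (le_of_eq ?_))
    ring

/-- The Picard operator of the Volterra equation with causal nonlinearity `F` and free term `σ`. -/
noncomputable def picard {ι : Type*} (τ₀ : ℝ) (F : (ι → ℝ → ℝ) → ι → ℝ → ℝ) (σ : ι → ℝ → ℝ)
    (φ : ι → ℝ → ℝ) : ι → ℝ → ℝ :=
  fun k t => σ k t + ∫ τ in t..τ₀, F φ k τ

section Volterra

variable {ι : Type*} {τ₀ : ℝ} {F : (ι → ℝ → ℝ) → ι → ℝ → ℝ} {σ : ι → ℝ → ℝ} {H : ℝ → ℝ}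

lemma picard_continuous (hσ : ∀ k, Continuous (σ k))
    (hF : ∀ φ, (∀ k, Continuous (φ k)) → ∀ k a b, IntervalIntegrable (F φ k) volume a b)
    (φ : ι → ℝ → ℝ) (hφ : ∀ k, Continuous (φ k)) (k : ι) :
    Continuous (picard τ₀ F σ φ k) :=
  (hσ k).add (continuous_integral_left τ₀ _ (hF φ hφ k))

/-- Since `W` is antitone, a bound by `c * W` at time `x ≥ τ` is a bound by `c * W τ`; this is
where causality enters. -/
lemma picard_contract
    (hF : ∀ φ, (∀ k, Continuous (φ k)) → ∀ k a b, IntervalIntegrable (F φ k) volume a b)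
    (hFz : ∀ φ k t, τ₀ < t → F φ k t = 0)
    (hLip : ∀ φ ψ k t w, t ≤ τ₀ → (∀ m x, t ≤ x → |φ m x - ψ m x| ≤ w) →
      |F φ k t - F ψ k t| ≤ H t * w)
    (hH : ∀ a b, IntervalIntegrable H volume a b)
    {W : ℝ → ℝ} (hWc : Continuous W) (hWa : Antitone W) (hW0 : ∀ t, 0 ≤ W t)
    (hW : ∀ t, t ≤ τ₀ → ∫ x in t..τ₀, H x * W x ≤ W t / 2)
    {c : ℝ} (hc : 0 ≤ c) {φ ψ : ι → ℝ → ℝ}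
    (hφ : ∀ k, Continuous (φ k)) (hψ : ∀ k, Continuous (ψ k))
    (hd : ∀ k t, |φ k t - ψ k t| ≤ c * W t) (k : ι) (t : ℝ) :
    |picard τ₀ F σ φ k t - picard τ₀ F σ ψ k t| ≤ c / 2 * W t := by
  rcases le_total t τ₀ with ht | ht
  · have e : picard τ₀ F σ φ k t - picard τ₀ F σ ψ k t =
        ∫ τ in t..τ₀, (F φ k τ - F ψ k τ) := by
      rw [integral_sub (hF φ hφ k t τ₀) (hF ψ hψ k t τ₀)]
      simp only [picard]
      ring
    rw [e]
    have hi : IntervalIntegrable (fun x => c * (H x * W x)) volume t τ₀ :=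
      ((hH t τ₀).mul_continuousOn hWc.continuousOn).const_mul _
    have h1 := norm_integral_le_of_norm_le (f := fun τ => F φ k τ - F ψ k τ) ht
      (Filter.Eventually.of_forall fun x hx => ?_) hi
    · rw [Real.norm_eq_abs, intervalIntegral.integral_const_mul] at h1
      have h2 := mul_le_mul_of_nonneg_left (hW t ht) hc
      linarith
    · have h3 := hLip φ ψ k x (c * W x) hx.2 fun m y hy =>
        (hd m y).trans (mul_le_mul_of_nonneg_left (hWa hy) hc)
      rw [Real.norm_eq_abs]
      linarith
  · simp only [picard]
    rw [integral_eq_zero_of_ge τ₀ t ht _ (hFz φ k), integral_eq_zero_of_ge τ₀ t ht _ (hFz ψ k)]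
    simpa using mul_nonneg (by linarith : 0 ≤ c / 2) (hW0 t)

/-- Existence and uniqueness for a causal Volterra equation whose nonlinearity is Lipschitz with an
integrable coefficient `H`. -/
theorem volterra_existsUnique [Fintype ι] (hσ : ∀ k, Continuous (σ k))
    (hF : ∀ φ, (∀ k, Continuous (φ k)) → ∀ k a b, IntervalIntegrable (F φ k) volume a b)
    (hFz : ∀ φ k t, τ₀ < t → F φ k t = 0)
    (hLip : ∀ φ ψ k t w, t ≤ τ₀ → (∀ m x, t ≤ x → |φ m x - ψ m x| ≤ w) →
      |F φ k t - F ψ k t| ≤ H t * w)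
    (hH : ∀ a b, IntervalIntegrable H volume a b) (hH0 : ∀ x, 0 ≤ H x) :
    ∃! φ : ι → ℝ → ℝ, (∀ k, Continuous (φ k)) ∧ picard τ₀ F σ φ = φ := by
  have hsum : ∀ D : ι → ℝ → ℝ, (∀ k a b, IntervalIntegrable (D k) volume a b) →
      (∀ k t, τ₀ < t → D k t = 0) →
      ∃ W : ℝ → ℝ, Continuous W ∧ Antitone W ∧ (∀ t, 0 ≤ W t) ∧
        (∀ k t, |∫ x in t..τ₀, D k x| ≤ W t) ∧
        (∀ t, t ≤ τ₀ → ∫ x in t..τ₀, H x * W x ≤ W t / 2) := by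
    intro D hD hDz
    have hE : ∀ a b, IntervalIntegrable (fun x => ∑ k, |D k x|) volume a b := by
      intro a b
      have := IntervalIntegrable.sum Finset.univ (f := fun k x => |D k x|)
        fun k _ => (hD k a b).abs
      have e : (fun x => ∑ k, |D k x|) = ∑ k, fun x => |D k x| := by
        funext x
        simp
      rwa [e]
    obtain ⟨W, h1, h2, h3, h4, h5⟩ := exists_weight τ₀ H (fun x => ∑ k, |D k x|) hH hH0 hE
      (fun x => Finset.sum_nonneg fun k _ => abs_nonneg _)
      (fun x hx => by simp [hDz _ x hx])
    refine ⟨W, h1, h2, h3, fun k t => ?_, h5⟩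
    rcases le_total t τ₀ with ht | ht
    · refine le_trans ?_ (h4 t ht)
      rw [← Real.norm_eq_abs]
      refine norm_integral_le_of_norm_le ht (Filter.Eventually.of_forall fun x _ => ?_) (hE t τ₀)
      exact Finset.single_le_sum (f := fun k => |D k x|) (fun k _ => abs_nonneg _)
        (Finset.mem_univ k)
    · rw [integral_eq_zero_of_ge τ₀ t ht _ (hDz k)]
      simpa using h3 t
  refine existsUnique_of_exists_of_unique ?_ ?_
  · obtain ⟨W, hWc, hWa, hW0, hWD, hW⟩ := hsum (F σ) (hF σ hσ) (hFz σ)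
    set u : ℕ → ι → ℝ → ℝ := fun i => (picard τ₀ F σ)^[i] σ with hu
    have hus : ∀ i, u (i + 1) = picard τ₀ F σ (u i) := fun i =>
      Function.iterate_succ_apply' _ _ _
    have huc : ∀ i k, Continuous (u i k) := by
      intro i
      induction i with
      | zero => exact hσ
      | succ i ih => rw [hus]; exact picard_continuous hσ hF _ ih
    have hstep : ∀ i k t, |u (i + 1) k t - u i k t| ≤ (1 / 2) ^ i * W t := by
      intro i
      induction i with
      | zero =>
        intro k t
        rw [hus]
        simpa [hu, picard] using hWD k t
      | succ i ih =>
        intro k t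
        rw [hus (i + 1)]
        nth_rewrite 2 [hus i]
        have := picard_contract (σ := σ) hF hFz hLip hH hWc hWa hW0 hW (by positivity)
          (huc (i + 1)) (huc i) ih k t
        rwa [pow_succ, mul_one_div]
    have hgeo : ∀ k t i, dist (u i k t) (u (i + 1) k t) ≤ W t * (1 / 2) ^ i := by
      intro k t i
      rw [dist_comm, Real.dist_eq, mul_comm]
      exact hstep i k t
    have hlim : ∀ k t, ∃ a, Filter.Tendsto (fun i => u i k t) Filter.atTop (nhds a) := fun k t =>
      cauchySeq_tendsto_of_complete
        (cauchySeq_of_le_geometric (1 / 2) (W t) (by norm_num) (hgeo k t))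
    choose φ hφ using hlim
    have hrate : ∀ i k t, |u i k t - φ k t| ≤ 2 * (1 / 2) ^ i * W t := by
      intro i k t
      have := dist_le_of_le_geometric_of_tendsto (1 / 2) (W t) (by norm_num) (hgeo k t) (hφ k t) i
      rw [Real.dist_eq] at this
      refine this.trans (le_of_eq ?_)
      ring
    have hpow : Filter.Tendsto (fun i : ℕ => 2 * (1 / 2 : ℝ) ^ i) Filter.atTop (nhds 0) := by
      simpa using (tendsto_pow_atTop_nhds_zero_of_lt_one (r := (1 / 2 : ℝ))
        (by norm_num) (by norm_num)).const_mul 2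
    have hφc : ∀ k, Continuous (φ k) := by
      intro k
      have hloc : TendstoLocallyUniformly (fun i => u i k) (φ k) Filter.atTop := by
        rw [Metric.tendstoLocallyUniformly_iff]
        intro ε hε x
        -- near `x` the antitone weight is bounded by its value at `x - 1`
        refine ⟨Ioi (x - 1), Ioi_mem_nhds (by linarith), ?_⟩
        have h0 : Filter.Tendsto (fun i : ℕ => 2 * (1 / 2 : ℝ) ^ i * W (x - 1))
            Filter.atTop (nhds 0) := by simpa using hpow.mul_const (W (x - 1))
        filter_upwards [h0.eventually (gt_mem_nhds hε)] with i hi y hy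
        rw [dist_comm, Real.dist_eq]
        refine lt_of_le_of_lt ((hrate i k y).trans ?_) hi
        exact mul_le_mul_of_nonneg_left (hWa (le_of_lt hy)) (by positivity)
      exact hloc.continuous (Filter.Frequently.of_forall fun i => huc i k)
    refine ⟨φ, hφc, ?_⟩
    funext k t
    have h1 : Filter.Tendsto (fun i => u (i + 1) k t) Filter.atTop
        (nhds (picard τ₀ F σ φ k t)) := by
      rw [tendsto_iff_dist_tendsto_zero]
      have h0 : Filter.Tendsto (fun i : ℕ => 2 * (1 / 2 : ℝ) ^ i / 2 * W t)
          Filter.atTop (nhds 0) := by simpa using (hpow.div_const 2).mul_const (W t)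
      refine squeeze_zero (fun _ => dist_nonneg) (fun i => ?_) h0
      rw [Real.dist_eq, hus]
      exact picard_contract hF hFz hLip hH hWc hWa hW0 hW (by positivity) (huc i) hφc (hrate i) k t
    exact tendsto_nhds_unique h1 ((hφ k t).comp (Filter.tendsto_add_atTop_nat 1))
  · rintro φ ψ ⟨hφ, hφe⟩ ⟨hψ, hψe⟩
    obtain ⟨W, hWc, hWa, hW0, hWD, hW⟩ := hsum (fun k t => F φ k t - F ψ k t)
      (fun k a b => (hF φ hφ k a b).sub (hF ψ hψ k a b))
      (fun k t ht => by simp [hFz _ k t ht])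
    have hb : ∀ (i : ℕ) k t, |φ k t - ψ k t| ≤ (1 / 2) ^ i * W t := by
      intro i
      induction i with
      | zero =>
        intro k t
        have h1 := hWD k t
        rw [integral_sub (hF φ hφ k t τ₀) (hF ψ hψ k t τ₀)] at h1
        have h2 : φ k t - ψ k t = (∫ x in t..τ₀, F φ k x) - ∫ x in t..τ₀, F ψ k x := by
          nth_rewrite 1 [← hφe, ← hψe]
          simp only [picard]
          ring
        rw [h2]
        simpa using h1
      | succ i ih =>
        intro k t
        have := picard_contract (σ := σ) hF hFz hLip hH hWc hWa hW0 hW (by positivity)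
          hφ hψ ih k t
        rw [hφe, hψe] at this
        rwa [pow_succ, mul_one_div]
    funext k t
    have h0 : Filter.Tendsto (fun i : ℕ => (1 / 2 : ℝ) ^ i * W t) Filter.atTop (nhds 0) := by
      simpa using (tendsto_pow_atTop_nhds_zero_of_lt_one (r := (1 / 2 : ℝ))
        (by norm_num) (by norm_num)).mul_const (W t)
    have h1 : |φ k t - ψ k t| ≤ 0 := ge_of_tendsto' h0 fun i => hb i k t
    exact sub_eq_zero.1 (abs_nonpos_iff.1 h1)

end Volterra

lemma intervalIntegrable_indicator_Iic (τ₀ : ℝ) (f : ℝ → ℝ) (hf : LocallyIntegrableOn f (Iic τ₀))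
    (a b : ℝ) : IntervalIntegrable ((Iic τ₀).indicator f) volume a b := by
  have h1 := (locallyIntegrableOn_iff_locallyIntegrable_restrict isClosed_Iic).1 hf
  have h2 : IntegrableOn f (uIoc a b) (volume.restrict (Iic τ₀)) :=
    (h1.integrableOn_isCompact isCompact_uIcc).mono_set uIoc_subset_uIcc
  rw [intervalIntegrable_iff, IntegrableOn, integrable_indicator_iff measurableSet_Iic,
    IntegrableOn, Measure.restrict_restrict measurableSet_Iic]
  rwa [IntegrableOn, Measure.restrict_restrict measurableSet_uIoc, inter_comm] at h2

theorem cauchy_coproblem_advanced (τ₀ : ℝ) (n N : ℕ) (hn : 0 < n) (hN : 0 < N)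
    (G : Fin n → ℝ → (Fin n → Fin N → ℝ) → ℝ)
    (h : Fin n → ℝ → ℝ)
    (β : Fin n → Fin N → ℝ → ℝ)
    -- continuity of G k t in u
    (hGcont : ∀ k, ∀ t, t ≤ τ₀ → Continuous (G k t))
    -- (L*): the Lipschitz condition, with h k nonnegative and locally integrable
    (hh0 : ∀ k, ∀ t, t ≤ τ₀ → 0 ≤ h k t)
    (hhloc : ∀ k, LocallyIntegrableOn (h k) (Set.Iic τ₀))
    (hL : ∀ k, ∀ t, t ≤ τ₀ → ∀ u v : Fin n → Fin N → ℝ,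
        |G k t u - G k t v| ≤ h k t * ∑ m : Fin n, ∑ j : Fin N, |u m j - v m j|)
    -- (LI*): local integrability of superpositions
    (hLI : ∀ k, ∀ ψ : Fin n → Fin N → ℝ → ℝ, (∀ m j, Measurable (ψ m j)) →
        LocallyIntegrableOn (fun t => G k t fun m j => ψ m j t) (Set.Iic τ₀))
    -- β measurable and (Adv): the advance condition
    (hβ : ∀ m j, Measurable (β m j))
    (hAdv : ∀ m j, ∀ t, t ≤ τ₀ → t ≤ β m j t)
    -- terminal data, continuous on [τ₀,∞)
    (s : Fin n → ℝ → ℝ) (hs : ∀ k, ContinuousOn (s k) (Set.Ici τ₀)) :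
    ∃! φ : Fin n → ℝ → ℝ,
      (∀ k, Continuous (φ k)) ∧
      (∀ k, ∀ t, τ₀ ≤ t → φ k t = s k t) ∧
      (∀ k, ∀ t, t ≤ τ₀ →
        φ k t = s k τ₀ + ∫ τ in t..τ₀, G k τ fun m j => φ m (β m j τ)) := by
  set F : (Fin n → ℝ → ℝ) → Fin n → ℝ → ℝ := fun φ k =>
    (Iic τ₀).indicator fun τ => G k τ fun m j => φ m (β m j τ) with hFdef
  set σ : Fin n → ℝ → ℝ := fun k t => s k (max t τ₀) with hσdef
  -- the factor `n * N` counts the terms of the double sum in the Lipschitz condition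
  set H : ℝ → ℝ := fun t => ((n : ℝ) * N) * ∑ k, (Iic τ₀).indicator (h k) t with hHdef
  have hσ : ∀ k, Continuous (σ k) := fun k =>
    (hs k).comp_continuous (by fun_prop) fun t => le_max_right t τ₀
  have hF : ∀ φ : Fin n → ℝ → ℝ, (∀ k, Continuous (φ k)) →
      ∀ k a b, IntervalIntegrable (F φ k) volume a b := fun φ hφ k a b =>
    intervalIntegrable_indicator_Iic τ₀ _
      (hLI k (fun m j τ => φ m (β m j τ)) fun m j => (hφ m).measurable.comp (hβ m j)) a b
  have hFz : ∀ φ k t, τ₀ < t → F φ k t = 0 := fun φ k t ht =>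
    indicator_of_notMem (s := Iic τ₀) (not_le.2 ht) _
  have hind0 : ∀ k t, 0 ≤ (Iic τ₀).indicator (h k) t := fun k t =>
    indicator_nonneg (fun x hx => hh0 k x hx) t
  have hLip : ∀ (φ ψ : Fin n → ℝ → ℝ) k t w, t ≤ τ₀ →
      (∀ m x, t ≤ x → |φ m x - ψ m x| ≤ w) → |F φ k t - F ψ k t| ≤ H t * w := by
    intro φ ψ k t w ht hw
    have hmem : t ∈ Iic τ₀ := ht
    have hw0 : 0 ≤ w := (abs_nonneg _).trans (hw k t le_rfl)
    simp only [hFdef, indicator_of_mem hmem]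
    refine (hL k t ht _ _).trans ?_
    have h1 : ∑ m : Fin n, ∑ j : Fin N, |φ m (β m j t) - ψ m (β m j t)| ≤ (n : ℝ) * N * w := by
      calc _ ≤ ∑ m : Fin n, ∑ j : Fin N, w :=
            Finset.sum_le_sum fun m _ => Finset.sum_le_sum fun j _ => hw m _ (hAdv m j t ht)
        _ = _ := by simp [mul_assoc]
    have h2 : h k t ≤ ∑ k, (Iic τ₀).indicator (h k) t := by
      have := Finset.single_le_sum (f := fun k => (Iic τ₀).indicator (h k) t)
        (fun k _ => hind0 k t) (Finset.mem_univ k)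
      simpa only [indicator_of_mem hmem] using this
    calc _ ≤ (∑ k, (Iic τ₀).indicator (h k) t) * ((n : ℝ) * N * w) :=
          mul_le_mul h2 h1 (Finset.sum_nonneg fun _ _ => Finset.sum_nonneg fun _ _ => abs_nonneg _)
            ((hh0 k t ht).trans h2)
      _ = H t * w := by simp only [hHdef]; ring
  have hH : ∀ a b, IntervalIntegrable H volume a b := by
    intro a b
    have := IntervalIntegrable.sum Finset.univ (f := fun k => (Iic τ₀).indicator (h k))
      fun k _ => intervalIntegrable_indicator_Iic τ₀ _ (hhloc k) a b
    have e : H = fun x => ((n : ℝ) * N) * (∑ k, (Iic τ₀).indicator (h k)) x := by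
      funext x
      simp [hHdef]
    rw [e]
    exact this.const_mul _
  have hH0 : ∀ x, 0 ≤ H x := fun x =>
    mul_nonneg (by positivity) (Finset.sum_nonneg fun k _ => hind0 k x)
  have key := volterra_existsUnique (τ₀ := τ₀) hσ hF hFz hLip hH hH0
  -- the co-problem is the fixed point equation of the Picard operator
  refine (existsUnique_congr fun φ => and_congr_right fun _ => ?_).1 key
  have hint : ∀ k t, t ≤ τ₀ →
      ∫ τ in t..τ₀, F φ k τ = ∫ τ in t..τ₀, G k τ fun m j => φ m (β m j τ) := by
    intro k t ht
    refine integral_congr fun x hx => ?_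
    rw [uIcc_of_le ht] at hx
    exact indicator_of_mem (s := Iic τ₀) hx.2 _
  constructor
  · intro hφ
    refine ⟨fun k t ht => ?_, fun k t ht => ?_⟩
    · rw [← hφ]
      simp only [picard, hσdef]
      rw [integral_eq_zero_of_ge τ₀ t ht _ (hFz φ k), max_eq_left ht, add_zero]
    · rw [← hint k t ht]
      nth_rewrite 1 [← hφ]
      simp only [picard, hσdef]
      rw [max_eq_right ht]
  · rintro ⟨h1, h2⟩
    funext k t
    simp only [picard, hσdef]
    rcases le_total t τ₀ with ht | ht
    · rw [max_eq_right ht, hint k t ht, h2 k t ht]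
    · rw [integral_eq_zero_of_ge τ₀ t ht _ (hFz φ k), max_eq_left ht, add_zero, h1 k t ht]
end

section
/- Assume conditions (L*), (LI*) and (Adv). If φ = (φ_1,…,φ_n) and ψ = (ψ_1,…,ψ_n) are two continuous vector functions on ℝ that both satisfy φ_k(t) = s_k(τ₀) + ∫_t^{τ₀} G_k(τ, φ_1(β_{11}(τ)),…,φ_n(β_{nN}(τ))) dτ for all t ≤ τ₀ and coincide on [τ₀,∞) (φ_k(t) = ψ_k(t) = s_k(t) for t ≥ τ₀), then φ(t) = ψ(t) for all t ∈ ℝ, i.e., the solution of the Cauchy co-problem is unique on the whole half-axis (−∞,τ₀]. -/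
/-!
Let `D t = ∑ m, |φ m t - ψ m t|`. Both solutions agree on `[τ₀, ∞)`, so the set of `t ≤ τ₀` such that
`D` vanishes on `[t, ∞)` is nonempty. If `D` were nonzero somewhere, this set would be bounded below,
and by continuity of `D` its infimum `c` would belong to it. Choose `a < c` so close to `c` that
`n N ∫_a^c ∑ k, h k < 1` (possible since the primitive of an integrable function is continuous), and
let `M` be the maximum of `D` on `[a, c]`. Since `β m j τ ≥ τ`, the deviated arguments never leave
`[a, ∞)`, where `D ≤ M`; subtracting the integral equations gives `M ≤ (n N ∫_a^c ∑ k, h k) M`, so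
`M = 0` and `a` is in the set, contradicting the choice of `c` (`deviation_bound` is the estimate,
`exists_extend_zero` the extension from `c` to `a`).
-/

open MeasureTheory Set intervalIntegral

/-- The contraction estimate for one component: if every `φ m - ψ m` vanishes on `[c, ∞)` and is
at most `M` in absolute value on `[a, ∞)`, then on `[a, c]` the right-hand sides of the two integral equations
differ by at most `n N M ∫_a^c h`. -/
lemma deviation_bound {τ₀ : ℝ} {n N : ℕ} {g : ℝ → (Fin n → Fin N → ℝ) → ℝ} {h : ℝ → ℝ}
    {β : Fin n → Fin N → ℝ → ℝ} {φ ψ : Fin n → ℝ → ℝ} {a c t M : ℝ}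
    (hh0 : ∀ t, t ≤ τ₀ → 0 ≤ h t)
    (hhint : ∀ x y, x ≤ τ₀ → y ≤ τ₀ → IntervalIntegrable h volume x y)
    (hL : ∀ t, t ≤ τ₀ → ∀ u v : Fin n → Fin N → ℝ,
        |g t u - g t v| ≤ h t * ∑ m : Fin n, ∑ j : Fin N, |u m j - v m j|)
    (hgφ : ∀ x y, x ≤ τ₀ → y ≤ τ₀ →
        IntervalIntegrable (fun τ => g τ fun m j => φ m (β m j τ)) volume x y)
    (hgψ : ∀ x y, x ≤ τ₀ → y ≤ τ₀ →
        IntervalIntegrable (fun τ => g τ fun m j => ψ m (β m j τ)) volume x y)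
    (hAdv : ∀ m j, ∀ t, t ≤ τ₀ → t ≤ β m j t)
    (hc : c ≤ τ₀) (hat : a ≤ t) (htc : t ≤ c) (hM0 : 0 ≤ M)
    (hzero : ∀ m, ∀ x, c ≤ x → φ m x = ψ m x)
    (hM : ∀ m, ∀ x, a ≤ x → |φ m x - ψ m x| ≤ M) :
    |(∫ τ in t..τ₀, g τ fun m j => φ m (β m j τ)) - ∫ τ in t..τ₀, g τ fun m j => ψ m (β m j τ)|
      ≤ n * N * M * ∫ τ in a..c, h τ := by
  have htτ : t ≤ τ₀ := htc.trans hc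
  have htail : (∫ τ in c..τ₀, g τ fun m j => φ m (β m j τ))
      = ∫ τ in c..τ₀, g τ fun m j => ψ m (β m j τ) := by
    refine integral_congr fun τ hτ => ?_
    rw [uIcc_of_le hc] at hτ
    have : (fun m j => φ m (β m j τ)) = fun m j => ψ m (β m j τ) := by
      funext m j
      exact hzero m _ (hτ.1.trans (hAdv m j τ hτ.2))
    simp only [this]
  rw [← integral_add_adjacent_intervals (hgφ t c htτ hc) (hgφ c τ₀ hc le_rfl),
    ← integral_add_adjacent_intervals (hgψ t c htτ hc) (hgψ c τ₀ hc le_rfl), htail,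
    add_sub_add_right_eq_sub, ← integral_sub (hgφ t c htτ hc) (hgψ t c htτ hc)]
  have hK : (0 : ℝ) ≤ n * N * M := by positivity
  calc |∫ τ in t..c, ((g τ fun m j => φ m (β m j τ)) - g τ fun m j => ψ m (β m j τ))|
      ≤ ∫ τ in t..c, n * N * M * h τ := by
        rw [← Real.norm_eq_abs]
        refine norm_integral_le_of_norm_le htc ?_ ((hhint t c htτ hc).const_mul _)
        refine Filter.Eventually.of_forall fun τ hτ => ?_
        have hτ0 : τ ≤ τ₀ := hτ.2.trans hc
        have hsum : ∑ m : Fin n, ∑ j : Fin N, |φ m (β m j τ) - ψ m (β m j τ)| ≤ n * N * M := by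
          calc _ ≤ ∑ m : Fin n, ∑ j : Fin N, M :=
                Finset.sum_le_sum fun m _ => Finset.sum_le_sum fun j _ =>
                  hM m _ ((hat.trans hτ.1.le).trans (hAdv m j τ hτ0))
            _ = n * N * M := by simp [mul_assoc]
        calc _ ≤ h τ * ∑ m : Fin n, ∑ j : Fin N, |φ m (β m j τ) - ψ m (β m j τ)| := hL τ hτ0 _ _
          _ ≤ h τ * (n * N * M) := mul_le_mul_of_nonneg_left hsum (hh0 τ hτ0)
          _ = n * N * M * h τ := mul_comm _ _
    _ = n * N * M * ∫ τ in t..c, h τ := integral_const_mul _ _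
    _ ≤ n * N * M * ∫ τ in a..c, h τ := by
        refine mul_le_mul_of_nonneg_left ?_ hK
        rw [← integral_add_adjacent_intervals (hhint a t (hat.trans htτ) htτ) (hhint t c htτ hc)]
        have : 0 ≤ ∫ τ in a..t, h τ := integral_nonneg hat fun x hx => hh0 x (hx.2.trans htτ)
        linarith

/-- A continuous nonnegative `D` vanishing on `[c, ∞)` and satisfying the contraction estimate with
the integrable kernel `H` vanishes on a strictly larger half-line. -/
lemma exists_extend_zero {D H : ℝ → ℝ} {c K : ℝ} (hD : Continuous D) (hD0 : ∀ x, 0 ≤ D x)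
    (hH : IntegrableOn H (Icc (c - 1) c)) (hzero : ∀ x, c ≤ x → D x = 0)
    (hest : ∀ a t M, a ≤ t → t ≤ c → 0 ≤ M → (∀ x, a ≤ x → D x ≤ M) →
      D t ≤ K * M * ∫ τ in a..c, H τ) :
    ∃ a < c, ∀ x, a ≤ x → D x = 0 := by
  have hcont : ContinuousOn (fun x => K * ∫ τ in x..c, H τ) (Icc (c - 1) c) := by
    have huIcc : uIcc (c - 1) c = Icc (c - 1) c := uIcc_of_le (by linarith)
    have := continuousOn_primitive_interval_left (μ := volume) (f := H) (a := c - 1) (b := c)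
      (by rwa [huIcc])
    rw [huIcc] at this
    exact continuousOn_const.mul this
  have hev : ∀ᶠ x in nhdsWithin c (Iio c), K * (∫ τ in x..c, H τ) < 1 := by
    have h1 := (hcont c (right_mem_Icc.2 (by linarith))).eventually_lt_const
      (show K * (∫ τ in c..c, H τ) < 1 by simp)
    refine Filter.Eventually.filter_mono ?_ h1
    rw [← nhdsWithin_Ico_eq_nhdsLT (show c - 1 < c by linarith)]
    exact nhdsWithin_mono _ Ico_subset_Icc_self
  obtain ⟨a, ha, hac⟩ := (hev.and self_mem_nhdsWithin).exists
  have hac : a < c := hac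
  obtain ⟨p, hp, hmax⟩ := isCompact_Icc.exists_isMaxOn (nonempty_Icc.2 hac.le) hD.continuousOn
  have hle : ∀ x, a ≤ x → D x ≤ D p := fun x hx => by
    rcases le_total x c with hxc | hxc
    · exact hmax ⟨hx, hxc⟩
    · rw [hzero x hxc]; exact hD0 p
  have hp1 := hest a p (D p) hp.1 hp.2 (hD0 p) hle
  have hp0 : D p = 0 := by
    by_contra hne
    have hpos : 0 < D p := lt_of_le_of_ne (hD0 p) (Ne.symm hne)
    nlinarith
  exact ⟨a, hac, fun x hx => le_antisymm (hp0 ▸ hle x hx) (hD0 x)⟩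

theorem cauchy_coproblem_advanced_uniqueness (τ₀ : ℝ) (n N : ℕ) (hn : 0 < n) (hN : 0 < N)
    (G : Fin n → ℝ → (Fin n → Fin N → ℝ) → ℝ)
    (h : Fin n → ℝ → ℝ)
    (β : Fin n → Fin N → ℝ → ℝ)
    -- continuity of G k t in u
    (hGcont : ∀ k, ∀ t, t ≤ τ₀ → Continuous (G k t))
    -- (L*): the Lipschitz condition, with h k nonnegative and locally integrable
    (hh0 : ∀ k, ∀ t, t ≤ τ₀ → 0 ≤ h k t)
    (hhloc : ∀ k, LocallyIntegrableOn (h k) (Set.Iic τ₀))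
    (hL : ∀ k, ∀ t, t ≤ τ₀ → ∀ u v : Fin n → Fin N → ℝ,
        |G k t u - G k t v| ≤ h k t * ∑ m : Fin n, ∑ j : Fin N, |u m j - v m j|)
    -- (LI*): local integrability of superpositions
    (hLI : ∀ k, ∀ ψ' : Fin n → Fin N → ℝ → ℝ, (∀ m j, Measurable (ψ' m j)) →
        LocallyIntegrableOn (fun t => G k t fun m j => ψ' m j t) (Set.Iic τ₀))
    -- β measurable and (Adv): the advance condition
    (hβ : ∀ m j, Measurable (β m j))
    (hAdv : ∀ m j, ∀ t, t ≤ τ₀ → t ≤ β m j t)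
    -- terminal data, continuous on [τ₀,∞)
    (s : Fin n → ℝ → ℝ) (hs : ∀ k, ContinuousOn (s k) (Set.Ici τ₀))
    -- two solutions of the Cauchy co-problem
    (φ ψ : Fin n → ℝ → ℝ)
    (hφc : ∀ k, Continuous (φ k)) (hψc : ∀ k, Continuous (ψ k))
    (hφs : ∀ k, ∀ t, τ₀ ≤ t → φ k t = s k t) (hψs : ∀ k, ∀ t, τ₀ ≤ t → ψ k t = s k t)
    (hφeq : ∀ k, ∀ t, t ≤ τ₀ →
        φ k t = s k τ₀ + ∫ τ in t..τ₀, G k τ fun m j => φ m (β m j τ))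
    (hψeq : ∀ k, ∀ t, t ≤ τ₀ →
        ψ k t = s k τ₀ + ∫ τ in t..τ₀, G k τ fun m j => ψ m (β m j τ)) :
    ∀ k, ∀ t : ℝ, φ k t = ψ k t := by
  -- On compact subintervals of the closed half-line, local integrability is integrability.
  have hII : ∀ f : ℝ → ℝ, LocallyIntegrableOn f (Iic τ₀) → ∀ x y, x ≤ τ₀ → y ≤ τ₀ →
      IntervalIntegrable f volume x y := fun f hf x y hx hy =>
    (hf.integrableOn_compact_subset (fun z hz => hz.2.trans (sup_le hx hy))
      isCompact_uIcc).intervalIntegrable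
  have hgφ := fun k => hII _ (hLI k (fun m j t => φ m (β m j t))
    fun m j => (hφc m).measurable.comp (hβ m j))
  have hgψ := fun k => hII _ (hLI k (fun m j t => ψ m (β m j t))
    fun m j => (hψc m).measurable.comp (hβ m j))
  have hhint := fun k => hII _ (hhloc k)
  set D : ℝ → ℝ := fun t => ∑ m, |φ m t - ψ m t| with hDdef
  have hD : Continuous D := continuous_finsetSum _ fun m _ => ((hφc m).sub (hψc m)).abs
  have hD0 : ∀ x, 0 ≤ D x := fun x => Finset.sum_nonneg fun m _ => abs_nonneg _
  have hDm : ∀ m x, |φ m x - ψ m x| ≤ D x := fun m x =>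
    Finset.single_le_sum (f := fun m => |φ m x - ψ m x|) (fun i _ => abs_nonneg _)
      (Finset.mem_univ m)
  have heq : ∀ x, D x = 0 → ∀ m, φ m x = ψ m x := fun x hx m =>
    sub_eq_zero.1 (abs_nonpos_iff.1 (hx ▸ hDm m x))
  suffices hDz : ∀ t, D t = 0 from fun k t => heq t (hDz t) k
  by_contra! hne
  obtain ⟨T, hT⟩ := hne
  set S : Set ℝ := {t | t ≤ τ₀ ∧ ∀ x, t ≤ x → D x = 0} with hS
  have hSne : τ₀ ∈ S := ⟨le_rfl, fun x hx => Finset.sum_eq_zero fun m _ => by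
    rw [hφs m x hx, hψs m x hx, sub_self, abs_zero]⟩
  have hSbdd : BddBelow S := ⟨T, fun t ht => by
    by_contra! hlt
    exact hT (ht.2 T hlt.le)⟩
  set c := sInf S with hcdef
  have hcτ : c ≤ τ₀ := csInf_le hSbdd hSne
  have hIoi : Ioi c ⊆ {x | D x = 0} := fun x hx => by
    obtain ⟨t, ht, htx⟩ := exists_lt_of_csInf_lt ⟨_, hSne⟩ hx
    exact ht.2 x htx.le
  have hIci : ∀ x, c ≤ x → D x = 0 := fun x hx => by
    have := closure_minimal hIoi (isClosed_eq hD continuous_const)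
    rw [closure_Ioi] at this
    exact this hx
  obtain ⟨a, hac, ha⟩ := exists_extend_zero (H := fun τ => ∑ k, h k τ) (K := n * N) hD hD0
    (integrable_finsetSum _ fun k _ => (hhloc k).integrableOn_compact_subset
      (fun z hz => hz.2.trans hcτ) isCompact_Icc) hIci (by
    intro a t M hat htc hM0 hM
    rw [integral_finsetSum fun k _ => hhint k a c (hat.trans (htc.trans hcτ)) hcτ,
      Finset.mul_sum]
    refine Finset.sum_le_sum fun k _ => ?_
    rw [hφeq k t (htc.trans hcτ), hψeq k t (htc.trans hcτ), add_sub_add_left_eq_sub]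
    exact deviation_bound (hh0 k) (hhint k) (hL k) (hgφ k) (hgψ k) hAdv hcτ hat htc hM0
      (fun m x hx => heq x (hIci x hx) m) fun m x hx => (hDm m x).trans (hM x hx))
  exact absurd (csInf_le hSbdd (show a ∈ S from ⟨hac.le.trans hcτ, ha⟩)) (not_le.2 hac)
end
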